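/- There is an absolute constant c > 0 such that the following holds. Let v, u ∈ {±1}^d with m := #{i : vᵢ = uᵢ} satisfying |d/2 − m| ≤ d/4, let ε ∈ (0,1), and choose the integer threshold t so that E[f_v(x)] = ε. Then Σ_{k = ⌈c·log(d/ε)⌉}^{d − ⌈c·log(d/ε)⌉} R_k ≤ ε²/d. -/

import Mathlib

/-- The ±1 value of a hypercube coordinate encoded by a boolean. -/
def sgnB (b : Bool) : ℤ := if b then 1 else -1

/-- Inner product `v·x` of two vertices of the hypercube `{±1}^d`. -/
def dotB {d : ℕ} (v x : Fin d → Bool) : ℤ := ∑ i, sgnB (v i) * sgnB (x i)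

/-- `f_v(x) = 1{v·x ≥ 2t − d}`, real valued. -/
noncomputable def fv {d : ℕ} (t : ℕ) (v x : Fin d → Bool) : ℝ :=
  if 2 * (t : ℤ) - d ≤ dotB v x then 1 else 0

/-- `E[f_v(x)]` over `x` uniform on the hypercube. -/
noncomputable def Efv (d t : ℕ) (v : Fin d → Bool) : ℝ := (∑ x, fv t v x) / 2 ^ d

/-- The normalized Kravchuk polynomial
`K(n, a, b) = (1/(C(n,a)·C(n,b))) · Σ_{A,B ⊆ [n], |A|=a, |B|=b} (−1)^{|A ∩ B|}`. -/
noncomputable def krav (n a b : ℕ) : ℝ :=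
  (∑ A ∈ Finset.powersetCard a (Finset.univ : Finset (Fin n)),
      ∑ B ∈ Finset.powersetCard b (Finset.univ : Finset (Fin n)),
        (-1 : ℝ) ^ (A ∩ B).card) /
    ((n.choose a) * (n.choose b))

/-- `R_k := C(d,k) · (2^{−d}·Σ_{s=t}^{d} C(d,s)·K(d,k,s))² · K(d,m,k)`. -/
noncomputable def Rk (d t m k : ℕ) : ℝ :=
  (d.choose k : ℝ) *
    ((1 / 2 ^ d) * ∑ s ∈ Finset.Icc t d, (d.choose s : ℝ) * krav d k s) ^ 2 *
      krav d m k

open Finset Polynomial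

/-! ### Fourier analysis on the subsets of a finite type -/

lemma neg_one_pow_card_inter {ι : Type*} [DecidableEq ι] (A B : Finset ι) :
    (-1 : ℝ) ^ (A ∩ B).card = ∏ i ∈ B, if i ∈ A then (-1 : ℝ) else 1 := by
  rw [Finset.prod_ite, Finset.prod_const, Finset.prod_const_one, mul_one,
    Finset.filter_mem_eq_inter, Finset.inter_comm]

lemma sum_walsh_mul_walsh {ι : Type*} [Fintype ι] [DecidableEq ι] (B B' : Finset ι) :
    ∑ A : Finset ι, (-1 : ℝ) ^ (A ∩ B).card * (-1 : ℝ) ^ (A ∩ B').card =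
      if B = B' then 2 ^ Fintype.card ι else 0 := by
  have hprod : ∑ A : Finset ι, (-1 : ℝ) ^ (A ∩ B).card * (-1 : ℝ) ^ (A ∩ B').card =
      ∏ i : ι, (1 + (if i ∈ B then (-1 : ℝ) else 1) * (if i ∈ B' then (-1 : ℝ) else 1)) := by
    rw [Finset.prod_one_add, Finset.powerset_univ]
    refine Finset.sum_congr rfl fun A _ => ?_
    rw [Finset.inter_comm A B, Finset.inter_comm A B', neg_one_pow_card_inter,
      neg_one_pow_card_inter, Finset.prod_mul_distrib]
  rw [hprod]
  split_ifs with h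
  · subst h
    rw [← Finset.card_univ, ← Finset.prod_const]
    refine Finset.prod_congr rfl fun i _ => ?_
    split_ifs <;> norm_num
  · obtain ⟨i, hi⟩ : ∃ i, ¬(i ∈ B ↔ i ∈ B') := by
      by_contra! hall
      exact h (Finset.ext hall)
    refine Finset.prod_eq_zero (Finset.mem_univ i) ?_
    by_cases h1 : i ∈ B <;> by_cases h2 : i ∈ B' <;> simp_all

/-- Parseval's identity for the indicator of a family `S` of subsets. -/
lemma sum_sq_walsh_transform {ι : Type*} [Fintype ι] [DecidableEq ι] (S : Finset (Finset ι)) :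
    ∑ A : Finset ι, (∑ B ∈ S, (-1 : ℝ) ^ (A ∩ B).card) ^ 2 =
      2 ^ Fintype.card ι * S.card := by
  simp_rw [sq, Finset.sum_mul_sum]
  rw [Finset.sum_comm]
  simp_rw [Finset.sum_comm (s := (Finset.univ : Finset (Finset ι))), sum_walsh_mul_walsh]
  simp [mul_comm]

/-! ### The spectrum of a Hamming ball -/

lemma sum_Icc_choose_mul_krav (d t k : ℕ) :
    ∑ s ∈ Icc t d, (d.choose s : ℝ) * krav d k s =
      (∑ A ∈ powersetCard k (univ : Finset (Fin d)),
        ∑ B ∈ univ.filter (fun B : Finset (Fin d) => t ≤ B.card), (-1 : ℝ) ^ (A ∩ B).card) /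
        d.choose k := by
  have hterm : ∀ s ∈ Icc t d, (d.choose s : ℝ) * krav d k s =
      (∑ A ∈ powersetCard k (univ : Finset (Fin d)),
        ∑ B ∈ powersetCard s (univ : Finset (Fin d)), (-1 : ℝ) ^ (A ∩ B).card) /
        d.choose k := by
    intro s hs
    have hs' : (d.choose s : ℝ) ≠ 0 := by
      exact_mod_cast (Nat.choose_pos (Finset.mem_Icc.1 hs).2).ne'
    rw [krav, mul_div_assoc', mul_comm (d.choose k : ℝ), mul_div_mul_left _ _ hs']
  rw [Finset.sum_congr rfl hterm, ← Finset.sum_div, Finset.sum_comm]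
  congr 1
  refine Finset.sum_congr rfl fun A _ => ?_
  rw [← Finset.sum_fiberwise_of_maps_to (s := univ.filter _) (t := Icc t d)
    (g := fun B : Finset (Fin d) => B.card)]
  · refine Finset.sum_congr rfl fun s hs => Finset.sum_congr ?_ fun _ _ => rfl
    ext B
    simp only [mem_powersetCard, mem_filter, mem_univ, true_and, Finset.subset_univ]
    have := (Finset.mem_Icc.1 hs).1
    constructor
    · intro h; exact ⟨by omega, h⟩
    · exact fun h => h.2
  · intro B hB
    have h1 := Finset.card_le_univ B
    rw [Fintype.card_fin] at h1
    exact Finset.mem_Icc.2 ⟨(Finset.mem_filter.1 hB).2, h1⟩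

/-- The total Fourier weight of the threshold function is at most its mean. -/
lemma sum_choose_mul_sq_le (d t : ℕ) :
    ∑ k ∈ range (d + 1), (d.choose k : ℝ) *
      ((1 / 2 ^ d) * ∑ s ∈ Icc t d, (d.choose s : ℝ) * krav d k s) ^ 2 ≤
      ((univ.filter (fun B : Finset (Fin d) => t ≤ B.card)).card : ℝ) / 2 ^ d := by
  set S := univ.filter (fun B : Finset (Fin d) => t ≤ B.card) with hS
  have hterm : ∀ k ∈ range (d + 1), (d.choose k : ℝ) *
      ((1 / 2 ^ d) * ∑ s ∈ Icc t d, (d.choose s : ℝ) * krav d k s) ^ 2 ≤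
      (1 / 2 ^ d) ^ 2 * ∑ A ∈ powersetCard k (univ : Finset (Fin d)),
        (∑ B ∈ S, (-1 : ℝ) ^ (A ∩ B).card) ^ 2 := by
    intro k hk
    have hc : (0 : ℝ) < d.choose k := by
      exact_mod_cast Nat.choose_pos (Nat.lt_succ_iff.1 (Finset.mem_range.1 hk))
    rw [sum_Icc_choose_mul_krav, ← hS]
    have hcs := sq_sum_le_card_mul_sum_sq (s := powersetCard k (univ : Finset (Fin d)))
      (f := fun A => ∑ B ∈ S, (-1 : ℝ) ^ (A ∩ B).card)
    rw [card_powersetCard, Finset.card_univ, Fintype.card_fin] at hcs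
    rw [mul_pow, mul_left_comm]
    refine mul_le_mul_of_nonneg_left ?_ (by positivity)
    rw [div_pow, mul_div_assoc', div_le_iff₀ (by positivity)]
    calc _ ≤ (d.choose k : ℝ) * _ := mul_le_mul_of_nonneg_left hcs hc.le
      _ = _ := by ring
  refine (Finset.sum_le_sum hterm).trans (le_of_eq ?_)
  have hall : ∑ k ∈ range (d + 1), ∑ A ∈ powersetCard k (univ : Finset (Fin d)),
      (∑ B ∈ S, (-1 : ℝ) ^ (A ∩ B).card) ^ 2 = 2 ^ d * S.card := by
    have := sum_sq_walsh_transform S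
    rw [Fintype.card_fin] at this
    rw [← this, ← Finset.powerset_univ, Finset.sum_powerset, Finset.card_univ, Fintype.card_fin]
  rw [← Finset.mul_sum, hall]
  field_simp

lemma dotB_eq {d : ℕ} (v x : Fin d → Bool) :
    dotB v x = 2 * ((univ.filter fun i => v i = x i).card : ℤ) - d := by
  have h : ∀ i, sgnB (v i) * sgnB (x i) = 2 * (if v i = x i then 1 else 0) - 1 := by
    intro i
    cases v i <;> cases x i <;> simp [sgnB]
  simp_rw [dotB, h]
  rw [Finset.sum_sub_distrib, ← Finset.mul_sum, Finset.sum_boole]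
  simp

lemma Efv_eq (d t : ℕ) (v : Fin d → Bool) :
    Efv d t v = ((univ.filter (fun B : Finset (Fin d) => t ≤ B.card)).card : ℝ) / 2 ^ d := by
  rw [Efv, Finset.card_filter, Nat.cast_sum]
  congr 1
  refine Finset.sum_nbij' (fun x => univ.filter fun i => v i = x i)
    (fun B i => if i ∈ B then v i else !v i) ?_ ?_ ?_ ?_ ?_
  · simp
  · simp
  · intro x _
    funext i
    cases hv : v i <;> cases hx : x i <;> simp [hv, hx]
  · intro B _
    ext i
    by_cases h : i ∈ B <;> simp [h]
  · intro x _
    rw [fv, dotB_eq]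
    have hiff : (2 * (t : ℤ) - d ≤ 2 * ((univ.filter fun i => v i = x i).card : ℤ) - d) ↔
        t ≤ (univ.filter fun i => v i = x i).card := by omega
    simp only [hiff]
    split_ifs <;> simp

/-! ### Coefficientwise domination of polynomials -/

/-- `Q` dominates `P` when the absolute values of the coefficients of `P` are bounded by the
coefficients of `Q`. -/
def CoeffDominated (P Q : ℝ[X]) : Prop := ∀ k, |P.coeff k| ≤ Q.coeff k

lemma CoeffDominated.mul {P Q P' Q' : ℝ[X]} (h : CoeffDominated P Q)
    (h' : CoeffDominated P' Q') : CoeffDominated (P * P') (Q * Q') := by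
  intro k
  rw [coeff_mul, coeff_mul]
  refine (Finset.abs_sum_le_sum_abs _ _).trans (Finset.sum_le_sum fun x _ => ?_)
  rw [abs_mul]
  exact mul_le_mul (h _) (h' _) (abs_nonneg _) ((abs_nonneg _).trans (h _))

lemma CoeffDominated.pow {P Q : ℝ[X]} (h : CoeffDominated P Q) (n : ℕ) :
    CoeffDominated (P ^ n) (Q ^ n) := by
  induction n with
  | zero =>
    intro k
    simp only [pow_zero, coeff_one]
    split_ifs <;> simp
  | succ n ih => simpa only [pow_succ] using ih.mul h

lemma CoeffDominated.abs_coeff_mul_pow_le {P Q : ℝ[X]} (h : CoeffDominated P Q) {r : ℝ}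
    (hr : 0 ≤ r) (k : ℕ) : |P.coeff k| * r ^ k ≤ Q.eval r := by
  have hQ : ∀ j, 0 ≤ Q.coeff j := fun j => (abs_nonneg _).trans (h j)
  refine (mul_le_mul_of_nonneg_right (h k) (pow_nonneg hr k)).trans ?_
  rw [eval_eq_sum, Polynomial.sum]
  by_cases hk : k ∈ Q.support
  · exact Finset.single_le_sum (f := fun j => Q.coeff j * r ^ j)
      (fun j _ => mul_nonneg (hQ j) (pow_nonneg hr j)) hk
  · rw [notMem_support_iff.1 hk, zero_mul]
    exact Finset.sum_nonneg fun j _ => mul_nonneg (hQ j) (pow_nonneg hr j)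

lemma coeffDominated_one_add_X : CoeffDominated (1 + X) (1 + X) := by
  intro k
  simp only [coeff_add, coeff_one, coeff_X]
  split_ifs <;> norm_num

lemma coeffDominated_one_sub_X : CoeffDominated (1 - X) (1 + X) := by
  intro k
  simp only [coeff_add, coeff_sub, coeff_one, coeff_X]
  split_ifs <;> first | omega | norm_num

lemma coeffDominated_one_sub_X_sq : CoeffDominated (1 - X ^ 2) (1 + X ^ 2) := by
  intro k
  simp only [coeff_add, coeff_sub, coeff_one, coeff_X_pow]
  split_ifs <;> first | omega | norm_num

/-! ### Kravchuk polynomials as coefficients -/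

lemma sum_powersetCard_walsh_eq_coeff {d : ℕ} (A : Finset (Fin d)) (k : ℕ) :
    ∑ B ∈ powersetCard k (univ : Finset (Fin d)), (-1 : ℝ) ^ (A ∩ B).card =
      ((1 - X : ℝ[X]) ^ A.card * (1 + X) ^ (d - A.card)).coeff k := by
  have hprod : (1 - X : ℝ[X]) ^ A.card * (1 + X) ^ (d - A.card) =
      ∏ i : Fin d, (1 + C (if i ∈ A then (-1 : ℝ) else 1) * X) := by
    have hfac : ∀ i : Fin d, (1 + C (if i ∈ A then (-1 : ℝ) else 1) * X : ℝ[X]) =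
        if i ∈ A then 1 - X else 1 + X := by
      intro i
      split_ifs <;> simp [sub_eq_add_neg]
    simp_rw [hfac]
    rw [Finset.prod_ite, Finset.prod_const, Finset.prod_const, Finset.filter_mem_eq_inter,
      Finset.univ_inter]
    congr 2
    rw [Finset.filter_notMem_eq_sdiff, ← Finset.compl_eq_univ_sdiff, Finset.card_compl,
      Fintype.card_fin]
  rw [hprod, Finset.prod_one_add, finsetSum_coeff]
  have hcoeff : ∀ B : Finset (Fin d),
      (∏ i ∈ B, (C (if i ∈ A then (-1 : ℝ) else 1) * X : ℝ[X])).coeff k =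
        if B.card = k then (-1 : ℝ) ^ (A ∩ B).card else 0 := by
    intro B
    rw [Finset.prod_mul_distrib, Finset.prod_const, ← map_prod, ← neg_one_pow_card_inter,
      coeff_C_mul_X_pow]
    simp only [eq_comm]
  simp_rw [hcoeff]
  rw [← Finset.sum_filter, Finset.powersetCard_eq_filter]

lemma krav_eq_coeff {d m : ℕ} (hm : m ≤ d) (k : ℕ) :
    krav d m k = ((1 - X : ℝ[X]) ^ m * (1 + X) ^ (d - m)).coeff k / d.choose k := by
  have hc : (d.choose m : ℝ) ≠ 0 := by exact_mod_cast (Nat.choose_pos hm).ne'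
  rw [krav]
  have hsum : ∀ A ∈ powersetCard m (univ : Finset (Fin d)),
      ∑ B ∈ powersetCard k (univ : Finset (Fin d)), (-1 : ℝ) ^ (A ∩ B).card =
        ((1 - X : ℝ[X]) ^ m * (1 + X) ^ (d - m)).coeff k := by
    intro A hA
    rw [sum_powersetCard_walsh_eq_coeff, (mem_powersetCard.1 hA).2]
  rw [Finset.sum_congr rfl hsum, Finset.sum_const, card_powersetCard, Finset.card_univ,
    Fintype.card_fin, nsmul_eq_mul, mul_div_mul_left _ _ hc]

lemma abs_coeff_mul_pow_le {d m : ℕ} (hm : m ≤ d) (k : ℕ) {r : ℝ} (hr : 0 ≤ r) :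
    |((1 - X : ℝ[X]) ^ m * (1 + X) ^ (d - m)).coeff k| * r ^ k ≤
      (1 + r ^ 2) ^ min m (d - m) * (1 + r) ^ (d - 2 * min m (d - m)) := by
  have hfac : (1 - X ^ 2 : ℝ[X]) = (1 - X) * (1 + X) := by ring
  obtain h | h := le_total m (d - m)
  · have hP : (1 - X : ℝ[X]) ^ m * (1 + X) ^ (d - m) =
        (1 - X ^ 2) ^ m * (1 + X) ^ (d - 2 * m) := by
      rw [hfac, mul_pow, mul_assoc, ← pow_add]
      congr 2
      omega
    rw [hP, min_eq_left h]
    simpa using ((coeffDominated_one_sub_X_sq.pow m).mul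
      (coeffDominated_one_add_X.pow (d - 2 * m))).abs_coeff_mul_pow_le hr k
  · have hP : (1 - X : ℝ[X]) ^ m * (1 + X) ^ (d - m) =
        (1 - X ^ 2) ^ (d - m) * (1 - X) ^ (d - 2 * (d - m)) := by
      rw [hfac, mul_pow, mul_right_comm, ← pow_add]
      congr 2
      omega
    rw [hP, min_eq_right h]
    simpa using ((coeffDominated_one_sub_X_sq.pow (d - m)).mul
      (coeffDominated_one_sub_X.pow (d - 2 * (d - m)))).abs_coeff_mul_pow_le hr k

/-! ### The mode of the binomial distribution -/

lemma choose_succ_mul_pow_succ (d j : ℕ) (hj : j ≤ d) (r : ℝ) :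
    (j + 1 : ℝ) * (d.choose (j + 1) * r ^ (j + 1)) = ((d - j : ℝ) * r) * (d.choose j * r ^ j) := by
  have h : (d.choose (j + 1) : ℝ) * (j + 1) = d.choose j * (d - j) := by
    have := Nat.choose_succ_right_eq d j
    rw [← Nat.cast_sub hj]
    exact_mod_cast this
  calc _ = ((d.choose (j + 1) : ℝ) * (j + 1)) * r ^ (j + 1) := by ring
    _ = _ := by rw [h]; ring

lemma choose_mul_pow_le_mode {d k : ℕ} (hk : k < d) {r : ℝ} (hr : r * (d - k : ℝ) = k)
    {j : ℕ} (hj : j ≤ d) : (d.choose j : ℝ) * r ^ j ≤ d.choose k * r ^ k := by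
  have hdk : (0 : ℝ) < d - k := by
    have : (k : ℝ) < d := by exact_mod_cast hk
    linarith
  have hr0 : 0 ≤ r := by
    have : r = k / (d - k : ℝ) := eq_div_of_mul_eq hdk.ne' hr
    rw [this]; positivity
  have hnn : ∀ i : ℕ, 0 ≤ (d.choose i : ℝ) * r ^ i := fun i => by positivity
  obtain h | h := le_total j k
  · refine Nat.decreasingInduction'
      (P := fun i => (d.choose i : ℝ) * r ^ i ≤ d.choose k * r ^ k) ?_ h le_rfl
    intro i hi _ ih
    refine le_trans ?_ ih
    have hrec := choose_succ_mul_pow_succ d i (by omega) r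
    have hik : (i : ℝ) + 1 ≤ k := by exact_mod_cast hi
    have hratio : (i + 1 : ℝ) ≤ (d - i : ℝ) * r := by nlinarith
    refine le_of_mul_le_mul_left ?_ (by positivity : (0 : ℝ) < i + 1)
    rw [hrec]
    exact mul_le_mul_of_nonneg_right hratio (hnn i)
  · induction j, h using Nat.le_induction with
    | base => exact le_rfl
    | succ i hi ih =>
      refine le_trans ?_ (ih (by omega))
      have hrec := choose_succ_mul_pow_succ d i (by omega) r
      have hik : (k : ℝ) ≤ i := by exact_mod_cast hi
      have hratio : (d - i : ℝ) * r ≤ i + 1 := by nlinarith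
      refine le_of_mul_le_mul_left ?_ (by positivity : (0 : ℝ) < i + 1)
      rw [hrec]
      exact mul_le_mul_of_nonneg_right hratio (hnn i)

lemma one_add_pow_le_mode {d k : ℕ} (hk : k < d) {r : ℝ} (hr : r * (d - k : ℝ) = k) :
    (1 + r) ^ d ≤ (d + 1) * (d.choose k * r ^ k) := by
  rw [add_comm 1 r, add_pow]
  calc _ ≤ ∑ j ∈ range (d + 1), (d.choose k : ℝ) * r ^ k := by
        refine Finset.sum_le_sum fun j hj => ?_
        rw [one_pow, mul_one, mul_comm]
        exact choose_mul_pow_le_mode hk hr (Nat.lt_succ_iff.1 (Finset.mem_range.1 hj))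
    _ = _ := by simp

/-! ### Exponential decay of Kravchuk polynomials -/

lemma abs_krav_le {d m k : ℕ} (hm : m ≤ d) (hk0 : 0 < k) (hk : k < d)
    (hq : (d : ℝ) / 4 ≤ (min m (d - m) : ℕ)) :
    |krav d m k| ≤ (d + 1) * Real.exp (-(k * (d - k) / (2 * d))) := by
  have hkR : (0 : ℝ) < k := by exact_mod_cast hk0
  have hdk : (0 : ℝ) < d - k := by
    have : (k : ℝ) < d := by exact_mod_cast hk
    linarith
  have hd : (0 : ℝ) < d := by linarith
  set r : ℝ := k / (d - k) with hrdef
  have hr : r * (d - k : ℝ) = k := by rw [hrdef]; field_simp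
  have hr0 : 0 < r := by positivity
  set q := min m (d - m) with hqdef
  have h2q : 2 * q ≤ d := by omega
  have hc : (0 : ℝ) < d.choose k := by exact_mod_cast Nat.choose_pos hk.le
  have hcoeff := abs_coeff_mul_pow_le hm k hr0.le
  rw [← hqdef] at hcoeff
  have hexp : (1 + r ^ 2) ^ q * (1 + r) ^ (d - 2 * q) ≤
      Real.exp (-(k * (d - k) / (2 * d))) * (1 + r) ^ d := by
    have hbase : 1 + r ^ 2 ≤ Real.exp (-(2 * k * (d - k) / d ^ 2)) * (1 + r) ^ 2 := by
      have hle := Real.add_one_le_exp (-(2 * k * (d - k) / d ^ 2 : ℝ))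
      refine le_trans (le_of_eq ?_) (mul_le_mul_of_nonneg_right hle (by positivity))
      rw [hrdef]
      field_simp
      ring
    calc (1 + r ^ 2) ^ q * (1 + r) ^ (d - 2 * q)
        ≤ (Real.exp (-(2 * k * (d - k) / d ^ 2)) * (1 + r) ^ 2) ^ q * (1 + r) ^ (d - 2 * q) := by
          gcongr
      _ = Real.exp (q * -(2 * k * (d - k) / d ^ 2)) * (1 + r) ^ d := by
          rw [mul_pow, ← pow_mul, mul_assoc, ← pow_add, Nat.add_sub_cancel' h2q, Real.exp_nat_mul]
      _ ≤ _ := by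
          gcongr
          rw [mul_neg, neg_le_neg_iff]
          calc (k * (d - k) / (2 * d) : ℝ) = d / 4 * (2 * k * (d - k) / d ^ 2) := by
                field_simp
                norm_num
            _ ≤ _ := by gcongr
  have hmode := one_add_pow_le_mode hk hr
  rw [krav_eq_coeff hm, abs_div, abs_of_pos hc, div_le_iff₀ hc]
  refine le_of_mul_le_mul_right ?_ (pow_pos hr0 k)
  calc _ ≤ Real.exp (-(k * (d - k) / (2 * d))) * (1 + r) ^ d := hcoeff.trans hexp
    _ ≤ Real.exp (-(k * (d - k) / (2 * d))) * ((d + 1) * (d.choose k * r ^ k)) := by gcongr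
    _ = _ := by ring

lemma abs_krav_le_of_log {d m k : ℕ} {ε : ℝ} (hd : 2 ≤ d) (hε : 0 < ε) (hε1 : ε < 1)
    (hm : m ≤ d) (hq : (d : ℝ) / 4 ≤ (min m (d - m) : ℕ))
    (h1 : 12 * Real.log (d / ε) ≤ k) (h2 : 12 * Real.log (d / ε) ≤ d - k) :
    |krav d m k| ≤ ε / d := by
  have hdR : (2 : ℝ) ≤ d := by exact_mod_cast hd
  have hx : (d : ℝ) ≤ d / ε := by
    rw [le_div_iff₀ hε]; nlinarith
  have hlog : 0 < Real.log (d / ε) := Real.log_pos (by linarith)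
  have hk0 : (0 : ℝ) < k := by linarith
  have hkd : (k : ℝ) < d := by linarith
  refine (abs_krav_le hm (by exact_mod_cast hk0) (by exact_mod_cast hkd) hq).trans ?_
  set y := Real.log (d / ε) with hy
  have hexpo : 3 * y ≤ k * (d - k) / (2 * d) := by
    rw [le_div_iff₀ (by linarith)]
    obtain h | h := le_total (k : ℝ) (d - k) <;> nlinarith
  have hxpos : 0 < (d : ℝ) / ε := by positivity
  have hexp : Real.exp (-(3 * y)) = (ε / d) ^ 3 := by
    rw [show -(3 * y) = ((3 : ℕ) : ℝ) * -y by push_cast; ring, Real.exp_nat_mul, Real.exp_neg, hy,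
      Real.exp_log hxpos, inv_div]
  calc (d + 1) * Real.exp (-(k * (d - k) / (2 * d)))
      ≤ (d + 1) * Real.exp (-(3 * y)) := by gcongr
    _ = ((d + 1) * ε ^ 2 / d ^ 2) * (ε / d) := by rw [hexp]; field_simp
    _ ≤ 1 * (ε / d) := by
        gcongr
        rw [div_le_one (by positivity)]
        have hsq : ε ^ 2 ≤ 1 := pow_le_one₀ hε.le hε1.le
        nlinarith
    _ = ε / d := one_mul _

theorem stmt_17 :
    ∃ c > (0 : ℝ), ∀ (d t : ℕ) (v u : Fin d → Bool) (ε : ℝ) (m : ℕ),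
      m = (Finset.univ.filter fun i => v i = u i).card →
      |(d : ℝ) / 2 - m| ≤ (d : ℝ) / 4 →
      ε ∈ Set.Ioo (0 : ℝ) 1 → Efv d t v = ε →
      ∑ k ∈ Finset.Icc ⌈c * Real.log (d / ε)⌉₊ (d - ⌈c * Real.log (d / ε)⌉₊),
          Rk d t m k ≤ ε ^ 2 / d := by
  refine ⟨12, by norm_num, ?_⟩
  intro d t v u ε m hm hdm hε hE
  obtain ⟨hε0, hε1⟩ := hε
  have hmd : m ≤ d := by
    rw [hm]
    exact (Finset.card_le_univ _).trans (Fintype.card_fin d).le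
  rw [Efv_eq] at hE
  have hd : 2 ≤ d := by
    by_contra! hlt
    interval_cases d
    · rcases Nat.eq_zero_or_pos t with rfl | ht
      · norm_num at hE
        linarith
      · have : ∀ B : Finset (Fin 0), ¬ t ≤ B.card := by
          intro B hB
          rw [Finset.eq_empty_of_isEmpty B, Finset.card_empty] at hB
          omega
        simp [this] at hE
        linarith
    · interval_cases m <;> norm_num [abs_le] at hdm
  have hdR : (2 : ℝ) ≤ d := by exact_mod_cast hd
  have hq : (d : ℝ) / 4 ≤ (min m (d - m) : ℕ) := by
    rw [abs_le] at hdm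
    rw [Nat.cast_min, Nat.cast_sub hmd]
    exact le_min (by linarith) (by linarith)
  set L := ⌈12 * Real.log (d / ε)⌉₊
  have hLlog : 12 * Real.log (d / ε) ≤ L := Nat.le_ceil _
  have hterm : ∀ k ∈ Finset.Icc L (d - L), Rk d t m k ≤ (d.choose k : ℝ) *
      ((1 / 2 ^ d) * ∑ s ∈ Finset.Icc t d, (d.choose s : ℝ) * krav d k s) ^ 2 * (ε / d) := by
    intro k hk
    rw [Finset.mem_Icc] at hk
    refine mul_le_mul_of_nonneg_left ?_ (by positivity)
    have hlogpos : 0 < Real.log (d / ε) :=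
      Real.log_pos (by rw [lt_div_iff₀ hε0]; linarith)
    have hLpos : 0 < L := Nat.ceil_pos.2 (by positivity)
    have h1 : (L : ℝ) ≤ k := by exact_mod_cast hk.1
    have h2 : (k : ℝ) + L ≤ d := by
      have : k + L ≤ d := by omega
      exact_mod_cast this
    exact (le_abs_self _).trans
      (abs_krav_le_of_log hd hε0 hε1 hmd hq (by linarith) (by linarith))
  refine (Finset.sum_le_sum hterm).trans ?_
  rw [← Finset.sum_mul]
  have hsub : Finset.Icc L (d - L) ⊆ Finset.range (d + 1) := by
    intro k hk
    rw [Finset.mem_Icc] at hk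
    rw [Finset.mem_range]
    omega
  calc _ ≤ ε * (ε / d) := by
        refine mul_le_mul_of_nonneg_right ?_ (by positivity)
        refine (Finset.sum_le_sum_of_subset_of_nonneg hsub fun k _ _ => by positivity).trans ?_
        exact (sum_choose_mul_sq_le d t).trans hE.le
    _ = ε ^ 2 / d := by ring
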